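/- Let X be a set, B ⊂ X a finite subset, and 𝓕 a finite family of mutually commuting mappings from X to itself. Then there exist a constant N and a polynomial p such that for all integers n ≥ N, the cardinality of the iterated image |𝓕^{(n)}(B)| equals p(n). -/

import Mathlib

/-- The function is eventually given by a rational polynomial. -/
def EvPoly (h : ℕ → ℚ) : Prop := ∃ (N : ℕ) (p : Polynomial ℚ), ∀ n, N ≤ n → h n = p.eval (n : ℚ)

theorem EvPoly.add {f g : ℕ → ℚ} (hf : EvPoly f) (hg : EvPoly g) : EvPoly (fun n => f n + g n) := by
  obtain ⟨N, p, hp⟩ := hf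
  obtain ⟨M, q, hq⟩ := hg
  refine ⟨max N M, p + q, fun n hn => ?_⟩
  beta_reduce
  rw [Polynomial.eval_add, hp n (le_trans (le_max_left _ _) hn), hq n (le_trans (le_max_right _ _) hn)]

theorem EvPoly.sub {f g : ℕ → ℚ} (hf : EvPoly f) (hg : EvPoly g) : EvPoly (fun n => f n - g n) := by
  obtain ⟨N, p, hp⟩ := hf
  obtain ⟨M, q, hq⟩ := hg
  refine ⟨max N M, p - q, fun n hn => ?_⟩
  beta_reduce
  rw [Polynomial.eval_sub, hp n (le_trans (le_max_left _ _) hn), hq n (le_trans (le_max_right _ _) hn)]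

theorem EvPoly.zero : EvPoly (fun _ => 0) := ⟨0, 0, by simp⟩

theorem EvPoly.congr {f g : ℕ → ℚ} (hf : EvPoly f) (M : ℕ) (h : ∀ n, M ≤ n → g n = f n) :
    EvPoly g := by
  obtain ⟨N, p, hp⟩ := hf
  refine ⟨max N M, p, fun n hn => ?_⟩
  rw [h n (le_trans (le_max_right _ _) hn), hp n (le_trans (le_max_left _ _) hn)]

theorem EvPoly.sum {ι : Type*} (s : Finset ι) (f : ι → ℕ → ℚ) (hf : ∀ i, EvPoly (f i)) :
    EvPoly (fun n => ∑ i ∈ s, f i n) := by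
  classical
  induction s using Finset.induction_on with
  | empty => simpa using EvPoly.zero
  | insert a s ha ih =>
    simp only [Finset.sum_insert ha]
    exact (hf a).add ih

theorem EvPoly.shift {f : ℕ → ℚ} (hf : EvPoly f) (m : ℕ) : EvPoly (fun n => f (n - m)) := by
  obtain ⟨N, p, hp⟩ := hf
  refine ⟨N + m, p.comp (Polynomial.X - Polynomial.C (m : ℚ)), fun n hn => ?_⟩
  beta_reduce
  rw [hp (n - m) (by omega)]
  simp [Nat.cast_sub (show m ≤ n by omega)]

theorem exists_sum_poly (p : Polynomial ℚ) :
    ∃ q : Polynomial ℚ, ∀ n : ℕ, ∑ j ∈ Finset.range n, p.eval (j : ℚ) = q.eval (n : ℚ) := by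
  induction p using Polynomial.induction_on' with
  | add p q hp hq =>
    obtain ⟨a, ha⟩ := hp
    obtain ⟨b, hb⟩ := hq
    exact ⟨a + b, fun n => by simp [Finset.sum_add_distrib, ha, hb]⟩
  | monomial d c =>
    refine ⟨∑ i ∈ Finset.range (d + 1), Polynomial.C (c * (bernoulli i * ((d + 1).choose i) / (d + 1)))
      * Polynomial.X ^ (d + 1 - i), fun n => ?_⟩
    simp only [Polynomial.eval_monomial, ← Finset.mul_sum, sum_range_pow, Polynomial.eval_finsetSum,
      Polynomial.eval_mul, Polynomial.eval_C, Polynomial.eval_pow, Polynomial.eval_X]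
    rw [Finset.mul_sum]
    refine Finset.sum_congr rfl fun i _ => ?_
    ring

theorem EvPoly.cumsum {f : ℕ → ℚ} (hf : EvPoly f) :
    EvPoly (fun n => ∑ j ∈ Finset.range n, f j) := by
  obtain ⟨N, p, hp⟩ := hf
  obtain ⟨q, hq⟩ := exists_sum_poly p
  refine ⟨N, q + Polynomial.C (∑ j ∈ Finset.range N, (f j - p.eval (j : ℚ))), fun n hn => ?_⟩
  beta_reduce
  rw [Polynomial.eval_add, Polynomial.eval_C, ← hq n]
  clear hq
  induction n, hn using Nat.le_induction with
  | base => rw [Finset.sum_sub_distrib]; ring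
  | succ n hn ih =>
    rw [Finset.sum_range_succ, ih, Finset.sum_range_succ, hp n hn]; ring

theorem upper_stable {k : ℕ} (U : ℕ → Set (Fin k → ℕ)) (hU : ∀ m, IsUpperSet (U m))
    (hm : Monotone U) : ∃ M, ∀ m, M ≤ m → U m = U M := by
  classical
  have hfin : {x | Minimal (fun a => a ∈ ⋃ m, U m) x}.Finite :=
    WellQuasiOrderedLE.finite_of_isAntichain (setOfPred_minimal_antichain _)
  have hex : ∀ a, ∃ m, a ∈ (⋃ m, U m) → a ∈ U m := by
    intro a
    by_cases h : a ∈ ⋃ m, U m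
    · obtain ⟨m, hm⟩ := Set.mem_iUnion.1 h
      exact ⟨m, fun _ => hm⟩
    · exact ⟨0, fun h' => absurd h' h⟩
  choose d hd using hex
  refine ⟨hfin.toFinset.sup d, fun m hle => Set.Subset.antisymm ?_ (hm hle)⟩
  intro a ha
  obtain ⟨t, hta, ht⟩ := exists_minimal_le_of_wellFoundedLT (fun a => a ∈ ⋃ m, U m) a
    (Set.mem_iUnion.2 ⟨m, ha⟩)
  refine hU _ hta (hm (Finset.le_sup (f := d) ((Set.Finite.mem_toFinset hfin).2 ht)) (hd t ht.1))

open Classical in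
/-- Number of tuples of sum `n` in the set. -/
noncomputable def cnt {k : ℕ} (U : Set (Fin k → ℕ)) (n : ℕ) : ℕ :=
  ((Finset.Nat.antidiagonalTuple k n).filter (fun a => a ∈ U)).card

theorem cnt_succ {k : ℕ} (U : Set (Fin (k + 1) → ℕ)) (n : ℕ) :
    cnt U n = ∑ m ∈ Finset.range (n + 1), cnt {a : Fin k → ℕ | (Fin.cons m a : Fin (k + 1) → ℕ) ∈ U} (n - m) := by
  classical
  unfold cnt
  rw [Finset.card_eq_sum_card_fiberwise (f := fun a => a 0) (t := Finset.range (n + 1))]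
  · refine Finset.sum_congr rfl fun m hm => ?_
    have hm' := Finset.mem_range.1 hm
    refine Finset.card_bij' (fun a _ => Fin.tail a) (fun a _ => Fin.cons m a) ?_ ?_ ?_ ?_
    · intro a ha
      simp only [Finset.mem_filter, Finset.Nat.mem_antidiagonalTuple, Fin.sum_univ_succ] at ha
      obtain ⟨⟨h1, h2⟩, h3⟩ := ha
      simp only [Finset.mem_filter, Finset.Nat.mem_antidiagonalTuple, Fin.tail, Set.mem_ofPred_eq]
      refine ⟨by omega, ?_⟩
      have : (Fin.cons m (Fin.tail a) : Fin (k + 1) → ℕ) = a := by rw [← h3]; exact Fin.cons_self_tail a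
      change (Fin.cons m (Fin.tail a) : Fin (k + 1) → ℕ) ∈ U
      rwa [this]
    · intro a ha
      simp only [Finset.mem_filter, Finset.Nat.mem_antidiagonalTuple, Set.mem_ofPred_eq] at ha
      simp only [Finset.mem_filter, Finset.Nat.mem_antidiagonalTuple, Fin.sum_univ_succ, Fin.cons_zero,
        Fin.cons_succ]
      exact ⟨⟨by omega, ha.2⟩, trivial⟩
    · intro a ha
      rw [← (Finset.mem_filter.1 ha).2]
      exact Fin.cons_self_tail a
    · intro a ha
      exact Fin.tail_cons _ _
  · intro a ha
    simp only [Finset.coe_filter, Set.mem_ofPred_eq, Finset.Nat.mem_antidiagonalTuple, Fin.sum_univ_succ] at ha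
    simp only [Finset.coe_range, Set.mem_Iio]
    omega

theorem cnt_evPoly {k : ℕ} (U : Set (Fin k → ℕ)) (hU : IsUpperSet U) :
    EvPoly (fun n => (cnt U n : ℚ)) := by
  induction k with
  | zero =>
    refine EvPoly.zero.congr 1 fun n hn => ?_
    obtain ⟨n, rfl⟩ := Nat.exists_eq_add_of_le' hn
    simp [cnt]
  | succ k ih =>
    set V : ℕ → Set (Fin k → ℕ) := fun m => {a | (Fin.cons m a : Fin (k + 1) → ℕ) ∈ U} with hV
    have hVu : ∀ m, IsUpperSet (V m) := fun m a b hab ha =>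
      hU (Fin.cons_le_cons.2 ⟨le_rfl, hab⟩) ha
    have hVm : Monotone V := fun m m' h a ha => hU (Fin.cons_le_cons.2 ⟨h, le_rfl⟩) ha
    obtain ⟨M, hM⟩ := upper_stable V hVu hVm
    have h1 : EvPoly (fun n => ∑ m ∈ Finset.range M, (cnt (V m) (n - m) : ℚ)) :=
      EvPoly.sum _ (fun m n => (cnt (V m) (n - m) : ℚ)) fun m => (ih (V m) (hVu m)).shift m
    have h2 : EvPoly (fun n => ∑ j ∈ Finset.range (n + 1 - M), (cnt (V M) j : ℚ)) := by
      rcases M with _ | M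
      · refine (((ih (V 0) (hVu 0)).cumsum).add (ih (V 0) (hVu 0))).congr 0 fun n _ => ?_
        simp [Finset.sum_range_succ]
      · refine (((ih (V (M + 1)) (hVu (M + 1))).cumsum).shift M).congr 0 fun n _ => ?_
        simp
    refine (h1.add h2).congr M fun n hn => ?_
    rw [cnt_succ, Nat.cast_sum]
    change ∑ m ∈ Finset.range (n + 1), (cnt (V m) (n - m) : ℚ) = _
    conv_lhs => rw [show n + 1 = M + (n + 1 - M) by omega, Finset.sum_range_add]
    congr 1
    rw [← Finset.sum_range_reflect]
    refine Finset.sum_congr rfl fun j hj => ?_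
    have hj' := Finset.mem_range.1 hj
    rw [hM _ (by omega), show n - (M + (n + 1 - M - 1 - j)) = j by omega]

/-- Combinatorial core: images under an additive family. -/
theorem core {X : Type*} {k m : ℕ} (φ : (Fin k → ℕ) → X → X)
    (hφ : ∀ a c, φ (a + c) = φ c ∘ φ a) (b : Fin m → X) :
    EvPoly (fun n => (Set.ncard {x : X | ∃ a : Fin k → ℕ, ∑ i, a i = n ∧ ∃ j, x = φ a (b j)} : ℚ)) := by
  classical
  let key : (Fin k → ℕ) × Fin m → Lex (Lex (Fin k → ℕ) × Fin m) := fun p => toLex (toLex p.1, p.2)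
  have hkinj : Function.Injective key := by
    rintro ⟨a, j⟩ ⟨a', j'⟩ h
    have h' := toLex.injective h
    simp only [Prod.mk.injEq, EmbeddingLike.apply_eq_iff_eq] at h'
    exact Prod.ext h'.1 h'.2
  have hkadd : ∀ (a a' c : Fin k → ℕ) (j j' : Fin m), key (a, j) < key (a', j') →
      key (a + c, j) < key (a' + c, j') := by
    intro a a' c j j' h
    rw [Prod.Lex.toLex_lt_toLex] at h ⊢
    rcases h with h | ⟨h, h2⟩
    · left
      exact add_lt_add_left h (toLex c)
    · right
      refine ⟨?_, h2⟩
      simp only [EmbeddingLike.apply_eq_iff_eq] at h ⊢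
      rw [h]
  let D : Fin m → Set (Fin k → ℕ) := fun j => {a | ∃ a' j', ∑ i, a' i = ∑ i, a i ∧
    φ a' (b j') = φ a (b j) ∧ key (a', j') < key (a, j)}
  have hD : ∀ j, IsUpperSet (D j) := by
    rintro j a a2 hle ⟨a', j', hs, he, hlt⟩
    obtain ⟨c, rfl⟩ := exists_add_of_le hle
    refine ⟨a' + c, j', ?_, ?_, hkadd _ _ _ _ _ hlt⟩
    · simp [Finset.sum_add_distrib, hs]
    · simp [hφ, he]
  have hmain : EvPoly (fun n => ∑ j : Fin m,
      ((cnt (Set.univ : Set (Fin k → ℕ)) n : ℚ) - cnt (D j) n)) :=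
    EvPoly.sum _ (fun j n => ((cnt (Set.univ : Set (Fin k → ℕ)) n : ℚ) - cnt (D j) n))
      fun j => (cnt_evPoly _ isUpperSet_univ).sub (cnt_evPoly _ (hD j))
  refine hmain.congr 0 fun n _ => ?_
  let G : Finset (Σ _ : Fin m, (Fin k → ℕ)) := Finset.univ.sigma fun j =>
    (Finset.Nat.antidiagonalTuple k n).filter (fun a => a ∉ D j)
  have hset : {x : X | ∃ a : Fin k → ℕ, ∑ i, a i = n ∧ ∃ j, x = φ a (b j)} =
      (G.image fun p => φ p.2 (b p.1) : Finset X) := by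
    ext x
    simp only [Set.mem_ofPred_eq, Finset.coe_image, Set.mem_image, Finset.mem_coe]
    constructor
    · rintro ⟨a, ha, j, rfl⟩
      let P := ((Finset.Nat.antidiagonalTuple k n) ×ˢ (Finset.univ : Finset (Fin m))).filter
        (fun p => φ p.1 (b p.2) = φ a (b j))
      have hP : P.Nonempty := ⟨(a, j), by simp [P, Finset.Nat.mem_antidiagonalTuple, ha]⟩
      obtain ⟨⟨a0, j0⟩, h0, hmin⟩ := Finset.exists_min_image P key hP
      simp only [P, Finset.mem_filter, Finset.mem_product, Finset.mem_univ, and_true,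
        Finset.Nat.mem_antidiagonalTuple] at h0 hmin
      refine ⟨⟨j0, a0⟩, ?_, h0.2⟩
      simp only [G, Finset.mem_sigma, Finset.mem_univ, true_and, Finset.mem_filter,
        Finset.Nat.mem_antidiagonalTuple]
      refine ⟨h0.1, ?_⟩
      rintro ⟨a', j', hs, he, hlt⟩
      exact absurd hlt (not_lt.2 (hmin (a', j') ⟨hs.trans h0.1, he.trans h0.2⟩))
    · rintro ⟨⟨j, a⟩, hG, rfl⟩
      simp only [G, Finset.mem_sigma, Finset.mem_univ, true_and, Finset.mem_filter,
        Finset.Nat.mem_antidiagonalTuple] at hG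
      exact ⟨a, hG.1, j, rfl⟩
  rw [hset, Set.ncard_coe_finset, Finset.card_image_of_injOn]
  · rw [Finset.card_sigma, Nat.cast_sum]
    refine Finset.sum_congr rfl fun j _ => ?_
    have := Finset.card_filter_add_card_filter_not (s := Finset.Nat.antidiagonalTuple k n) (fun a => a ∈ D j)
    rw [eq_sub_iff_add_eq]
    simp only [cnt, Set.mem_univ, Finset.filter_true]
    rw [← this]
    push_cast
    rw [add_comm]
  · rintro ⟨j, a⟩ h1 ⟨j', a'⟩ h2 heq
    simp only [G, Finset.mem_coe, Finset.mem_sigma, Finset.mem_univ, true_and, Finset.mem_filter,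
      Finset.Nat.mem_antidiagonalTuple] at h1 h2
    simp only at heq
    rcases lt_trichotomy (key (a, j)) (key (a', j')) with h | h | h
    · exact absurd ⟨a, j, h1.1.trans h2.1.symm, heq, h⟩ h2.2
    · have := hkinj h
      simp only [Prod.mk.injEq] at this
      obtain ⟨rfl, rfl⟩ := this
      rfl
    · exact absurd ⟨a', j', h2.1.trans h1.1.symm, heq.symm, h⟩ h1.2


/-- Khovanskiĭ. Let `B ⊂ X` be a finite subset and `𝓕` a finite
family of mutually commuting mappings from `X` to itself. Then there exist a constant
`N` and a polynomial `p` such that for all `n ≥ N`, the cardinality of the `n`-th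
iterated image `𝓕^{(n)}(B) = ∪ (f₁∘⋯∘f_n)(B)` (union over all length-`n` lists of
members of `𝓕`, here encoded by lists and `foldr`) equals `p(n)`. -/
theorem card_iterated_image_eventually_polynomial
    {X : Type*} (B : Set X) (hB : B.Finite)
    (F : Set (X → X)) (hF : F.Finite)
    (hcomm : ∀ f ∈ F, ∀ g ∈ F, f ∘ g = g ∘ f) :
    ∃ (N : ℕ) (p : Polynomial ℝ), ∀ n : ℕ, N ≤ n →
      ((Set.ncard {x : X | ∃ L : List (X → X), L.length = n ∧ (∀ f ∈ L, f ∈ F) ∧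
          ∃ b ∈ B, x = L.foldr (fun f y => f y) b}) : ℝ) = p.eval (n : ℝ) := by
  classical
  have := hB.to_subtype
  have := hF.to_subtype
  obtain ⟨m, ⟨eB⟩⟩ := Finite.exists_equiv_fin B
  obtain ⟨k, ⟨eF⟩⟩ := Finite.exists_equiv_fin F
  let S : Set (Function.End X) := F
  let _ : CommMonoid (Submonoid.closure S) :=
    { (inferInstance : Monoid (Submonoid.closure S)) with
      mul_comm := (Submonoid.isMulCommutative_closure (Function.End X) (s := S) hcomm).is_comm.comm }
  let g : Fin k → Submonoid.closure S := fun i =>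
    ⟨(eF.symm i).1, Submonoid.subset_closure (eF.symm i).2⟩
  let ψ : (Fin k → ℕ) → Submonoid.closure S := fun a => ∏ i, g i ^ a i
  have hψ : ∀ a c, ψ (a + c) = ψ a * ψ c := fun a c => by
    simp [ψ, pow_add, Finset.prod_mul_distrib]
  have hψ0 : ψ 0 = 1 := by simp [ψ]
  have hψ1 : ∀ i, ψ (Pi.single i 1) = g i := fun i => by
    simp only [ψ]
    rw [Finset.prod_eq_single i]
    · simp
    · intro j _ hj
      simp [Pi.single_eq_of_ne hj]
    · simp
  let φ : (Fin k → ℕ) → X → X := fun a => ((ψ a : Submonoid.closure S) : Function.End X)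
  have hφ : ∀ a c, φ (a + c) = φ c ∘ φ a := fun a c => by
    simp only [φ]
    rw [add_comm, hψ]
    rfl
  have hφ0 : φ 0 = id := by simp only [φ, hψ0]; rfl
  have hφ1 : ∀ i, φ (Pi.single i 1) = (eF.symm i).1 := fun i => by simp only [φ, hψ1]; rfl
  let b : Fin m → X := fun j => (eB.symm j).1
  obtain ⟨N, p, hp⟩ := core φ hφ b
  refine ⟨N, p.map (algebraMap ℚ ℝ), fun n hn => ?_⟩
  have hset : {x : X | ∃ L : List (X → X), L.length = n ∧ (∀ f ∈ L, f ∈ F) ∧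
          ∃ b ∈ B, x = L.foldr (fun f y => f y) b} =
      {x : X | ∃ a : Fin k → ℕ, ∑ i, a i = n ∧ ∃ j, x = φ a (b j)} := by
    ext x
    simp only [Set.mem_ofPred_eq]
    constructor
    · rintro ⟨L, hL, hLF, y, hy, rfl⟩
      have key : ∀ L : List (X → X), (∀ f ∈ L, f ∈ F) →
          ∃ a : Fin k → ℕ, ∑ i, a i = L.length ∧ L.foldr (fun f y => f y) y = φ a y := by
        intro L
        induction L with
        | nil => intro _; exact ⟨0, by simp, by simp [hφ0]⟩
        | cons f L ih =>
          intro h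
          obtain ⟨a, ha, he⟩ := ih fun f hf => h f (List.mem_cons_of_mem _ hf)
          refine ⟨a + Pi.single (eF ⟨f, h f List.mem_cons_self⟩) 1, ?_, ?_⟩
          · simp [Finset.sum_add_distrib, ha]
          · rw [hφ, hφ1]
            simp [he]
      obtain ⟨a, ha, he⟩ := key L hLF
      exact ⟨a, ha.trans hL, eB ⟨y, hy⟩, by simp [b, he]⟩
    · rintro ⟨a, ha, j, rfl⟩
      have key : ∀ n (a : Fin k → ℕ), ∑ i, a i = n → ∃ L : List (X → X), L.length = n ∧
          (∀ f ∈ L, f ∈ F) ∧ φ a (b j) = L.foldr (fun f y => f y) (b j) := by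
        intro n
        induction n with
        | zero =>
          intro a ha
          have : a = 0 := by
            funext i
            exact (Finset.sum_eq_zero_iff.1 ha) i (Finset.mem_univ i)
          exact ⟨[], rfl, by simp, by simp [this, hφ0]⟩
        | succ n ih =>
          intro a ha
          obtain ⟨i, hi⟩ : ∃ i, a i ≠ 0 := by
            by_contra! hne
            simp [hne] at ha
          have hle : Pi.single i 1 ≤ a := by
            intro i'
            by_cases h : i' = i
            · subst h; simp; omega
            · simp [Pi.single_eq_of_ne h]
          obtain ⟨c, hc⟩ := exists_add_of_le hle
          rw [add_comm] at hc
          subst hc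
          have hc' : ∑ i, c i = n := by
            simp [Finset.sum_add_distrib] at ha
            exact ha
          obtain ⟨L, hL, hLF, he⟩ := ih c hc'
          refine ⟨(eF.symm i).1 :: L, by simp [hL], ?_, ?_⟩
          · intro f hf
            rcases List.mem_cons.1 hf with rfl | hf
            · exact (eF.symm i).2
            · exact hLF f hf
          · rw [hφ, hφ1]
            simp [he]
      obtain ⟨L, hL, hLF, he⟩ := key n a ha
      exact ⟨L, hL, hLF, b j, (eB.symm j).2, he⟩
  rw [hset]
  have h := congrArg (algebraMap ℚ ℝ) (hp n hn)
  rw [Polynomial.eval_natCast_map, ← h]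
  simp
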